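/- Let n ≥ 3, τ > 0 and C₀ > 0. Let σ be a C¹ map from {x ∈ ℝⁿ : |x| ≥ 1} to symmetric n×n real matrices satisfying ‖σ(x)‖ ≤ C₀ |x|^{−τ} and ‖Dσ(x)‖ ≤ C₀ |x|^{−τ−1} for all |x| ≥ 1, and set g(x) = I + σ(x). Let K(y) = y/|y|² be the Kelvin transform with partial derivatives ∂_i K^k(y) = δ_{ik}|y|^{−2} − 2 y_i y_k |y|^{−4}, and for 0 < |y| ≤ 1 define h_{ij}(y) = Σ_{k,l} ∂_i K^k(y) · ∂_j K^l(y) · g_{kl}(K(y)). Then there exists a constant C > 0 such that for all y with 0 < |y| ≤ 1 and all indices i, j, k one has |∂_k h_{ij}(y) + 4 |y|^{−5} (y_k/|y|) δ_{ij}| ≤ C |y|^{τ−5}. -/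

import Mathlib

open scoped BigOperators

/-- The Kelvin transform `K(y) = y / |y|²` on `ℝⁿ \ {0}`. -/
noncomputable def kelvin (n : ℕ) (y : EuclideanSpace ℝ (Fin n)) : EuclideanSpace ℝ (Fin n) :=
  (‖y‖ ^ 2)⁻¹ • y

/-- The partial derivatives of the Kelvin transform:
`∂_i K^k (y) = δ_{ik} |y|^{-2} - 2 y_i y_k |y|^{-4}`. -/
noncomputable def dKelvin (n : ℕ) (y : EuclideanSpace ℝ (Fin n)) (i k : Fin n) : ℝ :=
  (if i = k then (1 : ℝ) else 0) * ‖y‖ ^ (-(2 : ℝ)) - 2 * y i * y k * ‖y‖ ^ (-(4 : ℝ))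

/-- The components of the pulled-back metric
`h_{ij}(y) = Σ_{k,l} ∂_i K^k(y) ∂_j K^l(y) g_{kl}(K(y))`, where
`g_{kl}(x) = δ_{kl} + σ_{kl}(x)`. -/
noncomputable def pulledMetric (n : ℕ) (σ : EuclideanSpace ℝ (Fin n) → Fin n → Fin n → ℝ)
    (y : EuclideanSpace ℝ (Fin n)) (i j : Fin n) : ℝ :=
  ∑ k, ∑ l, dKelvin n y i k * dKelvin n y j l *
    ((if k = l then (1 : ℝ) else 0) + σ (kelvin n y) k l)

/-!
Write `h = K^*δ + K^*σ`. The derivative of the inversion `K` at `y` is `|y|⁻²` times a reflection,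
so `K^*δ = |y|⁻⁴ δ` exactly, and differentiating `|y|⁻⁴` gives the explicit term. For `K^*σ`, use
the scale-invariant quantity `|f(y)| + |y| ‖Df(y)‖`: it is submultiplicative, it is `O(|y|^a)` for
functions homogeneous of degree `a`, and up to a factor it is preserved by composition with `K`.
Hence `K^*σ` has size `O(|y|^(τ - 4))` in this sense, which costs one more power of `|y|` for the
derivative.
-/

section ScaledBound

variable {E F G : Type*} [NormedAddCommGroup E] [NormedSpace ℝ E] [NormedAddCommGroup F]
  [NormedSpace ℝ F] [NormedAddCommGroup G] [NormedSpace ℝ G] {s : Set E} {y : E} {A B : ℝ}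

/-- `f` is differentiable within `s` at `y` and its scale-invariant `C¹` size
`‖f y‖ + ‖y‖ * ‖Df(y)‖` is at most `A`. The sum, rather than the maximum, makes this size
submultiplicative with constant `1`. -/
def HasScaledBoundWithinAt (f : E → F) (A : ℝ) (s : Set E) (y : E) : Prop :=
  ∃ f' : E →L[ℝ] F, HasFDerivWithinAt f f' s y ∧ ‖f y‖ + ‖y‖ * ‖f'‖ ≤ A

namespace HasScaledBoundWithinAt

theorem nonneg {f : E → F} (hf : HasScaledBoundWithinAt f A s y) : 0 ≤ A := by
  obtain ⟨f', -, hA⟩ := hf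
  exact le_trans (by positivity) hA

theorem mono_bound {f : E → F} (hf : HasScaledBoundWithinAt f A s y) (hAB : A ≤ B) :
    HasScaledBoundWithinAt f B s y :=
  let ⟨f', hf', hA⟩ := hf
  ⟨f', hf', hA.trans hAB⟩

theorem of_norm_le_rpow {C p : ℝ} {f : E → F} (hy : y ≠ 0) (hf : DifferentiableWithinAt ℝ f s y)
    (hbd : ‖f y‖ ≤ C * ‖y‖ ^ p) (hbd' : ‖fderivWithin ℝ f s y‖ ≤ C * ‖y‖ ^ (p - 1)) :
    HasScaledBoundWithinAt f (2 * C * ‖y‖ ^ p) s y := by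
  refine ⟨_, hf.hasFDerivWithinAt, ?_⟩
  calc ‖f y‖ + ‖y‖ * ‖fderivWithin ℝ f s y‖
      ≤ C * ‖y‖ ^ p + ‖y‖ * (C * ‖y‖ ^ (p - 1)) := by gcongr
    _ = 2 * C * ‖y‖ ^ p := by
        have := norm_ne_zero_iff.2 hy
        rw [Real.rpow_sub_one this]
        field_simp
        norm_num

theorem const (c : F) : HasScaledBoundWithinAt (fun _ => c) ‖c‖ s y :=
  ⟨0, hasFDerivWithinAt_const c y s, by simp⟩

theorem id : HasScaledBoundWithinAt (fun z => z) (2 * ‖y‖) s y := by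
  refine ⟨.id ℝ E, hasFDerivWithinAt_id y s, ?_⟩
  have h := mul_le_mul_of_nonneg_left (ContinuousLinearMap.norm_id_le (𝕜 := ℝ) (E := E))
    (norm_nonneg y)
  linarith

theorem add {f g : E → F} (hf : HasScaledBoundWithinAt f A s y)
    (hg : HasScaledBoundWithinAt g B s y) :
    HasScaledBoundWithinAt (fun z => f z + g z) (A + B) s y := by
  obtain ⟨f', hf', hA⟩ := hf
  obtain ⟨g', hg', hB⟩ := hg
  refine ⟨f' + g', hf'.add hg', ?_⟩
  calc ‖f y + g y‖ + ‖y‖ * ‖f' + g'‖ ≤ (‖f y‖ + ‖g y‖) + ‖y‖ * (‖f'‖ + ‖g'‖) := by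
        gcongr <;> exact norm_add_le _ _
    _ = (‖f y‖ + ‖y‖ * ‖f'‖) + (‖g y‖ + ‖y‖ * ‖g'‖) := by ring
    _ ≤ A + B := add_le_add hA hB

theorem neg {f : E → F} (hf : HasScaledBoundWithinAt f A s y) :
    HasScaledBoundWithinAt (fun z => -f z) A s y :=
  let ⟨f', hf', hA⟩ := hf
  ⟨-f', hf'.neg, by rwa [norm_neg, norm_neg]⟩

theorem sub {f g : E → F} (hf : HasScaledBoundWithinAt f A s y)
    (hg : HasScaledBoundWithinAt g B s y) :
    HasScaledBoundWithinAt (fun z => f z - g z) (A + B) s y := by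
  simpa only [sub_eq_add_neg] using hf.add hg.neg

theorem sum {ι : Type*} (t : Finset ι) {f : ι → E → F}
    (hf : ∀ i ∈ t, HasScaledBoundWithinAt (f i) A s y) :
    HasScaledBoundWithinAt (fun z => ∑ i ∈ t, f i z) (t.card * A) s y := by
  classical
  induction t using Finset.induction_on with
  | empty => simpa using const (0 : F)
  | insert i t hi ih =>
    have h := (hf i (Finset.mem_insert_self i t)).add
      (ih fun j hj => hf j (Finset.mem_insert_of_mem hj))
    simp only [Finset.sum_insert hi, Finset.card_insert_of_notMem hi, Nat.cast_succ]
    exact h.mono_bound (by linarith)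

theorem mul {f g : E → ℝ} (hf : HasScaledBoundWithinAt f A s y)
    (hg : HasScaledBoundWithinAt g B s y) :
    HasScaledBoundWithinAt (fun z => f z * g z) (A * B) s y := by
  have hA₀ := hf.nonneg
  obtain ⟨f', hf', hA⟩ := hf
  obtain ⟨g', hg', hB⟩ := hg
  refine ⟨f y • g' + g y • f', hf'.mul hg', ?_⟩
  have hderiv : ‖f y • g' + g y • f'‖ ≤ ‖f y‖ * ‖g'‖ + ‖g y‖ * ‖f'‖ :=
    (norm_add_le _ _).trans_eq (by rw [norm_smul, norm_smul])
  calc ‖f y * g y‖ + ‖y‖ * ‖f y • g' + g y • f'‖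
      ≤ ‖f y‖ * ‖g y‖ + ‖y‖ * (‖f y‖ * ‖g'‖ + ‖g y‖ * ‖f'‖) := by rw [norm_mul]; gcongr
    _ ≤ ‖f y‖ * ‖g y‖ + ‖y‖ * (‖f y‖ * ‖g'‖ + ‖g y‖ * ‖f'‖) + ‖y‖ * ‖f'‖ * (‖y‖ * ‖g'‖) :=
        le_add_of_nonneg_right (by positivity)
    _ = (‖f y‖ + ‖y‖ * ‖f'‖) * (‖g y‖ + ‖y‖ * ‖g'‖) := by ring
    _ ≤ A * B := by gcongr

theorem clm_comp {f : E → F} (hf : HasScaledBoundWithinAt f A s y) (L : F →L[ℝ] G)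
    (hL : ∀ v, ‖L v‖ ≤ ‖v‖) : HasScaledBoundWithinAt (fun z => L (f z)) A s y := by
  obtain ⟨f', hf', hA⟩ := hf
  refine ⟨L.comp f', L.hasFDerivAt.comp_hasFDerivWithinAt y hf', le_trans ?_ hA⟩
  have hderiv : ‖L.comp f'‖ ≤ ‖f'‖ :=
    (L.comp f').opNorm_le_bound (norm_nonneg f') fun v => (hL (f' v)).trans (f'.le_opNorm v)
  gcongr
  exact hL (f y)

theorem comp {c : ℝ} {f : E → F} {g : F → G} {t : Set F}
    (hg : HasScaledBoundWithinAt g B t (f y))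
    (hf : HasScaledBoundWithinAt f (c * ‖f y‖) s y) (hc : 1 ≤ c) (hst : Set.MapsTo f s t) :
    HasScaledBoundWithinAt (fun z => g (f z)) (c * B) s y := by
  obtain ⟨g', hg', hB⟩ := hg
  obtain ⟨f', hf', hA⟩ := hf
  refine ⟨g'.comp f', hg'.comp y hf' hst, ?_⟩
  have hf'_le : ‖y‖ * ‖f'‖ ≤ c * ‖f y‖ := by linarith [norm_nonneg (f y)]
  calc ‖g (f y)‖ + ‖y‖ * ‖g'.comp f'‖ ≤ ‖g (f y)‖ + ‖y‖ * (‖g'‖ * ‖f'‖) := by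
        gcongr; exact g'.opNorm_comp_le f'
    _ = ‖g (f y)‖ + ‖g'‖ * (‖y‖ * ‖f'‖) := by ring
    _ ≤ c * ‖g (f y)‖ + ‖g'‖ * (c * ‖f y‖) := by
        gcongr; exact le_mul_of_one_le_left (norm_nonneg _) hc
    _ = c * (‖g (f y)‖ + ‖f y‖ * ‖g'‖) := by ring
    _ ≤ c * B := by gcongr

end HasScaledBoundWithinAt

end ScaledBound

theorem rpow_neg_four_eq_rpow_neg_two_sq {r : ℝ} (hr : 0 ≤ r) :
    r ^ (-4 : ℝ) = (r ^ (-2 : ℝ)) ^ 2 := by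
  rw [← Real.rpow_mul_natCast hr]
  norm_num

section NormRpow

variable {E : Type*} [NormedAddCommGroup E] [InnerProductSpace ℝ E] {y : E}

theorem hasFDerivAt_norm_rpow_of_ne_zero (p : ℝ) (hy : y ≠ 0) :
    HasFDerivAt (fun z : E => ‖z‖ ^ p) ((p * ‖y‖ ^ (p - 2)) • innerSL ℝ y) y := by
  have hsq_rpow (q : ℝ) (z : E) : (‖z‖ ^ 2) ^ q = ‖z‖ ^ (2 * q) := by
    rw [← Real.rpow_natCast_mul (norm_nonneg z), Nat.cast_ofNat]
  have h := (hasStrictFDerivAt_norm_sq y).hasFDerivAt.rpow_const (p := p / 2)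
    (.inl (pow_ne_zero 2 (norm_ne_zero_iff.2 hy)))
  simp only [hsq_rpow, mul_sub, mul_div_cancel₀ p two_ne_zero, mul_one] at h
  convert! h using 1
  module

theorem HasScaledBoundWithinAt.norm_rpow {s : Set E} (p : ℝ) (hy : y ≠ 0) :
    HasScaledBoundWithinAt (fun z => ‖z‖ ^ p) ((1 + |p|) * ‖y‖ ^ p) s y := by
  refine ⟨_, (hasFDerivAt_norm_rpow_of_ne_zero p hy).hasFDerivWithinAt, le_of_eq ?_⟩
  have hpow : ‖y‖ ^ p = ‖y‖ ^ (p - 2) * ‖y‖ ^ 2 := by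
    rw [← Real.rpow_add_natCast (norm_ne_zero_iff.2 hy), Nat.cast_ofNat, sub_add_cancel]
  have hnonneg (q : ℝ) : ‖‖y‖ ^ q‖ = ‖y‖ ^ q := Real.norm_of_nonneg (by positivity)
  rw [norm_smul, innerSL_apply_norm, norm_mul, Real.norm_eq_abs p, hnonneg, hnonneg, hpow]
  ring

end NormRpow

theorem uniqueDiffOn_puncturedUnitBall {E : Type*} [NormedAddCommGroup E] [NormedSpace ℝ E] :
    UniqueDiffOn ℝ {z : E | 0 < ‖z‖ ∧ ‖z‖ ≤ 1} := by
  have hball : UniqueDiffOn ℝ (Metric.closedBall (0 : E) 1) :=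
    uniqueDiffOn_convex (convex_closedBall 0 1)
      ⟨0, Metric.ball_subset_interior_closedBall (Metric.mem_ball_self one_pos)⟩
  convert! hball.inter (isOpen_compl_singleton (x := (0 : E))) using 1
  ext z
  simp [and_comm]

section Kelvin

open scoped RealInnerProductSpace

variable {n : ℕ} {y : EuclideanSpace ℝ (Fin n)} {s : Set (EuclideanSpace ℝ (Fin n))}

theorem norm_kelvin (y : EuclideanSpace ℝ (Fin n)) : ‖kelvin n y‖ = ‖y‖⁻¹ := by
  rcases eq_or_ne y 0 with rfl | hy
  · simp [kelvin]
  · have := norm_ne_zero_iff.2 hy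
    rw [kelvin, norm_smul, norm_inv, norm_pow, norm_norm]
    field_simp

theorem mapsTo_kelvin_puncturedUnitBall :
    Set.MapsTo (kelvin n) {z | 0 < ‖z‖ ∧ ‖z‖ ≤ 1} {x | 1 ≤ ‖x‖} := fun z hz => by
  simpa only [Set.mem_ofPred_eq, norm_kelvin] using (one_le_inv₀ hz.1).2 hz.2

theorem kelvin_eq_inversion : kelvin n = EuclideanGeometry.inversion 0 1 := by
  ext1 y
  simp [kelvin, EuclideanGeometry.inversion]

theorem hasFDerivAt_kelvin (hy : y ≠ 0) :
    HasFDerivAt (kelvin n)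
      ((‖y‖⁻¹ ^ 2) • ((ℝ ∙ y)ᗮ.reflection : EuclideanSpace ℝ (Fin n) →L[ℝ] _)) y := by
  simpa [kelvin_eq_inversion] using EuclideanGeometry.hasFDerivAt_inversion (R := 1) hy

theorem hasScaledBoundWithinAt_kelvin (hy : y ≠ 0) :
    HasScaledBoundWithinAt (kelvin n) (2 * ‖kelvin n y‖) s y := by
  refine ⟨_, (hasFDerivAt_kelvin hy).hasFDerivWithinAt, ?_⟩
  have hreflection :
      ‖((ℝ ∙ y)ᗮ.reflection : EuclideanSpace ℝ (Fin n) →L[ℝ] EuclideanSpace ℝ (Fin n))‖ ≤ 1 :=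
    (ℝ ∙ y)ᗮ.reflection.toLinearIsometry.norm_toContinuousLinearMap_le
  have := norm_pos_iff.2 hy
  calc _ ≤ ‖y‖⁻¹ + ‖y‖ * (‖y‖⁻¹ ^ 2 * 1) := by
        rw [norm_kelvin, norm_smul, norm_pow, norm_inv, norm_norm]; gcongr
    _ = 2 * ‖kelvin n y‖ := by rw [norm_kelvin]; field_simp; norm_num

theorem dKelvin_eq_reflection_apply (y : EuclideanSpace ℝ (Fin n)) (i k : Fin n) :
    dKelvin n y i k =
      ‖y‖ ^ (-2 : ℝ) * (ℝ ∙ y)ᗮ.reflection (EuclideanSpace.single i 1) k := by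
  have hpow : ‖y‖ ^ (-2 : ℝ) = (‖y‖ ^ 2)⁻¹ := by
    rw [Real.rpow_neg (norm_nonneg y), Real.rpow_ofNat]
  have hreflection : (ℝ ∙ y)ᗮ.reflection (EuclideanSpace.single i 1) k =
      (if i = k then 1 else 0) - 2 * (y i / ‖y‖ ^ 2) * y k := by
    rw [Submodule.reflection_orthogonal_apply, Submodule.reflection_singleton_apply]
    simp [EuclideanSpace.inner_single_right, eq_comm (a := k), mul_assoc]
  rw [dKelvin, rpow_neg_four_eq_rpow_neg_two_sq (norm_nonneg y), hreflection, hpow]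
  ring

theorem sum_dKelvin_mul_dKelvin (y : EuclideanSpace ℝ (Fin n)) (i j : Fin n) :
    ∑ k, dKelvin n y i k * dKelvin n y j k =
      (if i = j then (1 : ℝ) else 0) * (‖y‖ ^ (-2 : ℝ)) ^ 2 := by
  set R := (ℝ ∙ y)ᗮ.reflection
  calc ∑ k, dKelvin n y i k * dKelvin n y j k
      = (‖y‖ ^ (-2 : ℝ)) ^ 2 *
          ⟪R (EuclideanSpace.single i 1), R (EuclideanSpace.single j 1)⟫ := by
        simp only [dKelvin_eq_reflection_apply, PiLp.inner_apply, Finset.mul_sum]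
        exact Finset.sum_congr rfl fun k _ => by rw [RCLike.inner_apply, conj_trivial]; ring
    _ = (if i = j then (1 : ℝ) else 0) * (‖y‖ ^ (-2 : ℝ)) ^ 2 := by
        rw [LinearIsometryEquiv.inner_map_map, mul_comm]
        simp [EuclideanSpace.inner_single_left]

theorem hasScaledBoundWithinAt_dKelvin (hy : y ≠ 0) (i k : Fin n) :
    HasScaledBoundWithinAt (fun z => dKelvin n z i k) (43 * ‖y‖ ^ (-2 : ℝ)) s y := by
  have hcoord (m : Fin n) : HasScaledBoundWithinAt (fun z => z m) (2 * ‖y‖) s y :=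
    HasScaledBoundWithinAt.id.clm_comp (EuclideanSpace.proj m) fun v => PiLp.norm_apply_le v m
  have hquadratic := (((HasScaledBoundWithinAt.const (2 : ℝ)).mul (hcoord i)).mul (hcoord k)).mul
    (.norm_rpow (-4) hy)
  have hscalar := (HasScaledBoundWithinAt.const (if i = k then (1 : ℝ) else 0)).mul
    (.norm_rpow (s := s) (-2) hy)
  refine (hscalar.sub hquadratic).mono_bound ?_
  have hpow : ‖y‖ ^ (-2 : ℝ) = ‖y‖ ^ (-4 : ℝ) * ‖y‖ ^ 2 := by
    rw [← Real.rpow_add_natCast (norm_ne_zero_iff.2 hy)]; norm_num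
  have hδ : ‖if i = k then (1 : ℝ) else 0‖ ≤ 1 := by split_ifs <;> simp
  calc _ ≤ 1 * ((1 + |-2|) * ‖y‖ ^ (-2 : ℝ)) +
          ‖(2 : ℝ)‖ * (2 * ‖y‖) * (2 * ‖y‖) * ((1 + |-4|) * ‖y‖ ^ (-4 : ℝ)) := by gcongr
    _ = 43 * ‖y‖ ^ (-2 : ℝ) := by
        simp only [hpow, abs_neg, Nat.abs_ofNat, Real.norm_ofNat]; ring

/-- The components `(K^*T)_{ij}` of the pullback under the Kelvin transform of the covariant
2-tensor field with components `T x k l`, with `dKelvin` as the Jacobian of the transform, so that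
`pulledMetric n σ` is the case `T = δ + σ`. -/
noncomputable def kelvinPullback (n : ℕ) (T : EuclideanSpace ℝ (Fin n) → Fin n → Fin n → ℝ)
    (y : EuclideanSpace ℝ (Fin n)) (i j : Fin n) : ℝ :=
  ∑ k, ∑ l, dKelvin n y i k * dKelvin n y j l * T (kelvin n y) k l

theorem pulledMetric_eq_add_kelvinPullback
    (σ : EuclideanSpace ℝ (Fin n) → Fin n → Fin n → ℝ) (y : EuclideanSpace ℝ (Fin n))
    (i j : Fin n) :
    pulledMetric n σ y i j =
      (if i = j then (1 : ℝ) else 0) * ‖y‖ ^ (-4 : ℝ) + kelvinPullback n σ y i j := by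
  simp only [rpow_neg_four_eq_rpow_neg_two_sq (norm_nonneg y), ← sum_dKelvin_mul_dKelvin,
    pulledMetric, kelvinPullback, mul_add, Finset.sum_add_distrib, mul_ite, mul_one, mul_zero,
    Finset.sum_ite_eq, Finset.mem_univ, if_true]

theorem hasScaledBoundWithinAt_kelvinPullback {T : EuclideanSpace ℝ (Fin n) → Fin n → Fin n → ℝ}
    {t : Set (EuclideanSpace ℝ (Fin n))} {B : ℝ} (hy : y ≠ 0)
    (hst : Set.MapsTo (kelvin n) s t) (hT : HasScaledBoundWithinAt T B t (kelvin n y))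
    (i j : Fin n) :
    HasScaledBoundWithinAt (fun z => kelvinPullback n T z i j)
      (2 * 43 ^ 2 * n ^ 2 * B * ‖y‖ ^ (-4 : ℝ)) s y := by
  have hcomp := hT.comp (hasScaledBoundWithinAt_kelvin hy) one_le_two hst
  have hentry (k l : Fin n) :
      HasScaledBoundWithinAt (fun z => T (kelvin n z) k l) (2 * B) s y :=
    (hcomp.clm_comp (.proj k) fun v => norm_le_pi_norm v k).clm_comp (.proj l)
      fun v => norm_le_pi_norm v l
  have hsum := HasScaledBoundWithinAt.sum Finset.univ fun k _ =>
    HasScaledBoundWithinAt.sum Finset.univ fun l _ =>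
      ((hasScaledBoundWithinAt_dKelvin hy i k).mul (hasScaledBoundWithinAt_dKelvin hy j l)).mul
        (hentry k l)
  refine hsum.mono_bound (le_of_eq ?_)
  rw [Finset.card_univ, Fintype.card_fin, rpow_neg_four_eq_rpow_neg_two_sq (norm_nonneg y)]
  ring

theorem fderivWithin_pulledMetric_apply_single
    {σ : EuclideanSpace ℝ (Fin n) → Fin n → Fin n → ℝ} {i j : Fin n}
    {R' : EuclideanSpace ℝ (Fin n) →L[ℝ] ℝ} (hy : y ≠ 0) (hs : UniqueDiffWithinAt ℝ s y)
    (hR' : HasFDerivWithinAt (fun z => kelvinPullback n σ z i j) R' s y) (k : Fin n) :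
    fderivWithin ℝ (fun z => pulledMetric n σ z i j) s y (EuclideanSpace.single k 1) =
      R' (EuclideanSpace.single k 1) -
        4 * ‖y‖ ^ (-(5 : ℝ)) * (y k / ‖y‖) * (if i = j then (1 : ℝ) else 0) := by
  have hleading := ((hasFDerivAt_norm_rpow_of_ne_zero (-4) hy).const_mul
    (if i = j then (1 : ℝ) else 0)).hasFDerivWithinAt (s := s)
  have hpow : ‖y‖ ^ (-5 : ℝ) = ‖y‖ ^ (-4 - 2 : ℝ) * ‖y‖ := by
    rw [← Real.rpow_add_one (norm_ne_zero_iff.2 hy)]; norm_num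
  have := norm_ne_zero_iff.2 hy
  simp only [pulledMetric_eq_add_kelvinPullback]
  rw [(hleading.fun_add hR').fderivWithin hs, hpow]
  simp only [add_apply, smul_apply, innerSL_apply_apply,
    EuclideanSpace.inner_single_right, smul_eq_mul, conj_trivial, one_mul]
  field_simp
  ring

end Kelvin

theorem kelvin_pulled_metric_derivative_estimate_general (n : ℕ) (τ C₀ : ℝ)
    (σ : EuclideanSpace ℝ (Fin n) → Fin n → Fin n → ℝ)
    (hσ : DifferentiableOn ℝ σ {x : EuclideanSpace ℝ (Fin n) | 1 ≤ ‖x‖})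
    (hσbd : ∀ x : EuclideanSpace ℝ (Fin n), 1 ≤ ‖x‖ → ‖σ x‖ ≤ C₀ * ‖x‖ ^ (-τ))
    (hσbd' : ∀ x : EuclideanSpace ℝ (Fin n), 1 ≤ ‖x‖ →
      ‖fderivWithin ℝ σ {x : EuclideanSpace ℝ (Fin n) | 1 ≤ ‖x‖} x‖ ≤ C₀ * ‖x‖ ^ (-τ - 1))
    (y : EuclideanSpace ℝ (Fin n)) (hy₀ : 0 < ‖y‖) (hy₁ : ‖y‖ ≤ 1) (i j k : Fin n) :
    |fderivWithin ℝ (fun z => pulledMetric n σ z i j)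
        {z : EuclideanSpace ℝ (Fin n) | 0 < ‖z‖ ∧ ‖z‖ ≤ 1} y (EuclideanSpace.single k 1)
      + 4 * ‖y‖ ^ (-(5 : ℝ)) * (y k / ‖y‖) * (if i = j then (1 : ℝ) else 0)|
      ≤ 4 * 43 ^ 2 * n ^ 2 * C₀ * ‖y‖ ^ (τ - 5) := by
  have hy : y ≠ 0 := norm_pos_iff.1 hy₀
  have hKy : 1 ≤ ‖kelvin n y‖ := mapsTo_kelvin_puncturedUnitBall ⟨hy₀, hy₁⟩
  have hσy : HasScaledBoundWithinAt σ (2 * C₀ * ‖y‖ ^ τ) {x | 1 ≤ ‖x‖} (kelvin n y) := by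
    have hKy_rpow : ‖kelvin n y‖ ^ (-τ) = ‖y‖ ^ τ := by
      rw [norm_kelvin, Real.inv_rpow hy₀.le, Real.rpow_neg hy₀.le, inv_inv]
    rw [← hKy_rpow]
    exact .of_norm_le_rpow (norm_pos_iff.1 (one_pos.trans_le hKy)) (hσ _ hKy) (hσbd _ hKy)
      (hσbd' _ hKy)
  obtain ⟨R', hR', hbound⟩ :=
    hasScaledBoundWithinAt_kelvinPullback hy mapsTo_kelvin_puncturedUnitBall hσy i j
  rw [fderivWithin_pulledMetric_apply_single hy
    (uniqueDiffOn_puncturedUnitBall y ⟨hy₀, hy₁⟩) hR', sub_add_cancel]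
  calc |R' (EuclideanSpace.single k 1)| ≤ ‖R'‖ := by
        simpa using R'.le_opNorm (EuclideanSpace.single k 1)
    _ ≤ 2 * 43 ^ 2 * n ^ 2 * (2 * C₀ * ‖y‖ ^ τ) * ‖y‖ ^ (-4 : ℝ) / ‖y‖ := by
        rw [le_div_iff₀' hy₀]
        exact (le_add_of_nonneg_left (norm_nonneg _)).trans hbound
    _ = 4 * 43 ^ 2 * n ^ 2 * C₀ * ‖y‖ ^ (τ - 5) := by
        rw [show τ - 5 = τ + -4 - 1 by ring, Real.rpow_sub_one hy₀.ne', Real.rpow_add hy₀]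
        ring

/-- if `σ` is a `C¹` symmetric-matrix-valued map on `{|x| ≥ 1}` with
`‖σ(x)‖ ≤ C₀ |x|^{-τ}` and `‖Dσ(x)‖ ≤ C₀ |x|^{-τ-1}`, then the partial derivatives of the
pulled-back metric components satisfy
`|∂_k h_{ij}(y) + 4 |y|^{-5} (y_k/|y|) δ_{ij}| ≤ C |y|^{τ-5}` on the punctured unit ball. -/
theorem kelvin_pulled_metric_derivative_estimate (n : ℕ) (hn : 3 ≤ n) (τ C₀ : ℝ) (hτ : 0 < τ)
    (hC₀ : 0 < C₀) (σ : EuclideanSpace ℝ (Fin n) → Fin n → Fin n → ℝ)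
    (hσC1 : ContDiffOn ℝ 1 σ {x : EuclideanSpace ℝ (Fin n) | 1 ≤ ‖x‖})
    (hσsymm : ∀ x : EuclideanSpace ℝ (Fin n), 1 ≤ ‖x‖ → ∀ i j, σ x i j = σ x j i)
    (hσbd : ∀ x : EuclideanSpace ℝ (Fin n), 1 ≤ ‖x‖ → ‖σ x‖ ≤ C₀ * ‖x‖ ^ (-τ))
    (hσbd' : ∀ x : EuclideanSpace ℝ (Fin n), 1 ≤ ‖x‖ →
      ‖fderivWithin ℝ σ {x : EuclideanSpace ℝ (Fin n) | 1 ≤ ‖x‖} x‖ ≤ C₀ * ‖x‖ ^ (-τ - 1)) :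
    ∃ C > 0, ∀ y : EuclideanSpace ℝ (Fin n), 0 < ‖y‖ → ‖y‖ ≤ 1 → ∀ i j k : Fin n,
      |fderivWithin ℝ (fun z => pulledMetric n σ z i j)
          {z : EuclideanSpace ℝ (Fin n) | 0 < ‖z‖ ∧ ‖z‖ ≤ 1} y (EuclideanSpace.single k 1)
        + 4 * ‖y‖ ^ (-(5 : ℝ)) * (y k / ‖y‖) * (if i = j then (1 : ℝ) else 0)|
        ≤ C * ‖y‖ ^ (τ - 5) := by
  exact ⟨4 * 43 ^ 2 * n ^ 2 * C₀, by positivity, kelvin_pulled_metric_derivative_estimate_general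
    n τ C₀ σ (hσC1.differentiableOn one_ne_zero) hσbd hσbd'⟩
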